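/- Weak invariance of Ω^♯: let χ be a closed covering of ℝⁿ, Ω ⊆ ℝⁿ open, V: Ω × Γ → ℝ continuous, and (x,σ) a trajectory in 𝒯_V ∩ 𝒯[χ] ∩ 𝒯_a[τ_D, N₀] such that x(t) ∈ B for all t ≥ 0 for some compact B ⊂ Ω. Then Ω^♯(x,σ) is weakly-invariant with respect to 𝒯_V* ∩ 𝒯[χ] ∩ 𝒯_a[τ_D, N₀]: for each (ξ,γ) ∈ Ω^♯(x,σ) there exists a trajectory (x*,σ*) in that class with x*(0) = ξ, σ*(0) = γ, and (x*(t), σ*(t)) ∈ Ω^♯(x,σ) for all t ≥ 0. -/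

import Mathlib

open Filter Set MeasureTheory Metric

/-- The switching times (points of left-discontinuity) of a signal `σ` on `(0,∞)`. -/
def SwitchTimes {Γ : Type*} (σ : ℝ → Γ) : Set ℝ :=
  {s | 0 < s ∧ ∀ ε > 0, ∃ u, s - ε < u ∧ u < s ∧ σ u ≠ σ s}

/-- `σ` is locally constant from the right at every time (right-continuity and
piecewise constancy from the right). -/
def RightLocConst {Γ : Type*} (σ : ℝ → Γ) : Prop :=
  ∀ s : ℝ, ∃ ε > 0, ∀ u : ℝ, s ≤ u → u < s + ε → σ u = σ s

/-- `σ` has average dwell-time `τD` and chatter bound `N₀`: the number of switching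
times in any open interval `(τ₁,τ₂) ⊆ ℝ₊` is at most `N₀ + (τ₂ - τ₁)/τD`. -/
def HasADT {Γ : Type*} (σ : ℝ → Γ) (τD : ℝ) (N₀ : ℕ) : Prop :=
  ∀ τ₁ τ₂ : ℝ, 0 ≤ τ₁ → τ₁ < τ₂ →
    (Nat.card ↥(SwitchTimes σ ∩ Set.Ioo τ₁ τ₂) : ℝ) ≤ (N₀ : ℝ) + (τ₂ - τ₁) / τD

/-- A switching signal with average dwell-time `τD > 0` and chatter bound `N₀`:
piecewise constant, right-continuous, with the average dwell-time property. -/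
def IsSwitchingSignal {Γ : Type*} (σ : ℝ → Γ) (τD : ℝ) (N₀ : ℕ) : Prop :=
  RightLocConst σ ∧ HasADT σ τD N₀
/-- A trajectory of the switched system `ẋ = f(x,σ)`: a continuous curve satisfying the
integral equation on `[0,∞)`. -/
def IsTrajectory {n m : ℕ}
    (f : EuclideanSpace ℝ (Fin n) → Fin m → EuclideanSpace ℝ (Fin n))
    (x : ℝ → EuclideanSpace ℝ (Fin n)) (σ : ℝ → Fin m) : Prop :=
  ContinuousOn x (Set.Ici 0) ∧
  ∀ t : ℝ, 0 ≤ t → x t = x 0 + ∫ s in (0:ℝ)..t, f (x s) (σ s)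

/-- The ω-limit set of `x : ℝ → ℝⁿ` (restricted to `[0,∞)`). -/
def OmegaLimit {n : ℕ} (x : ℝ → EuclideanSpace ℝ (Fin n)) : Set (EuclideanSpace ℝ (Fin n)) :=
  {ξ | ∃ s : ℕ → ℝ, StrictMono s ∧ (∀ k, 0 ≤ s k) ∧ Filter.Tendsto s Filter.atTop Filter.atTop ∧
    Filter.Tendsto (fun k => x (s k)) Filter.atTop (nhds ξ)}

/-- `τ¹_σ(t)`: the first switching time of `σ` strictly greater than `t`
(`∞`, i.e. `⊤ : EReal`, if there is none). -/
noncomputable def tau1 {Γ : Type*} (σ : ℝ → Γ) (t : ℝ) : EReal :=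
  sInf ((fun s : ℝ => (s : EReal)) '' (SwitchTimes σ ∩ Set.Ioi t))

/-- `Ω^♯(x,σ)`: the pairs `(ξ,γ)` for which there is a strictly increasing unbounded
sequence of nonnegative times `s k` with `τ¹_σ(s k) - s k → r` for some `r ∈ (0,∞]`,
`x (s k) → ξ` and `σ (s k) → γ` (eventually equal, `Γ` being discrete). -/
def OmegaSharp {n m : ℕ} (x : ℝ → EuclideanSpace ℝ (Fin n)) (σ : ℝ → Fin m) :
    Set (EuclideanSpace ℝ (Fin n) × Fin m) :=
  {p | ∃ s : ℕ → ℝ, StrictMono s ∧ (∀ k, 0 ≤ s k) ∧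
    Filter.Tendsto s Filter.atTop Filter.atTop ∧
    (∃ r : EReal, 0 < r ∧
      Filter.Tendsto (fun k => tau1 σ (s k) - ((s k : ℝ) : EReal)) Filter.atTop (nhds r)) ∧
    Filter.Tendsto (fun k => x (s k)) Filter.atTop (nhds p.1) ∧
    (∀ᶠ k in Filter.atTop, σ (s k) = p.2)}
/-- The state constraint `x(t) ∈ χ_{σ(t)}` for all `t ≥ 0` (membership in `𝒯[χ]`). -/
def InTchi {n m : ℕ} (χ : Fin m → Set (EuclideanSpace ℝ (Fin n)))
    (x : ℝ → EuclideanSpace ℝ (Fin n)) (σ : ℝ → Fin m) : Prop :=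
  ∀ t : ℝ, 0 ≤ t → x t ∈ χ (σ t)

/-- Membership in `𝒯_V`: the state stays in `Ω` and `V(x(·),σ(·))` does not increase
between times carrying the same switching index. -/
def InTV {n m : ℕ} (Ω : Set (EuclideanSpace ℝ (Fin n)))
    (V : EuclideanSpace ℝ (Fin n) → Fin m → ℝ)
    (x : ℝ → EuclideanSpace ℝ (Fin n)) (σ : ℝ → Fin m) : Prop :=
  (∀ t : ℝ, 0 ≤ t → x t ∈ Ω) ∧
  ∀ t t' : ℝ, 0 ≤ t → t ≤ t' → σ t = σ t' →
    V (x t') (σ t') ≤ V (x t) (σ t)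

/-- Membership in `𝒯_V^*`: in `𝒯_V`, and `V(x(·),σ(·))` takes equal values at any two
times carrying the same switching index. -/
def InTVstar {n m : ℕ} (Ω : Set (EuclideanSpace ℝ (Fin n)))
    (V : EuclideanSpace ℝ (Fin n) → Fin m → ℝ)
    (x : ℝ → EuclideanSpace ℝ (Fin n)) (σ : ℝ → Fin m) : Prop :=
  InTV Ω V x σ ∧
  ∀ t t' : ℝ, 0 ≤ t → 0 ≤ t' → σ t = σ t' →
    V (x t) (σ t) = V (x t') (σ t')

/-!
Let `s k → ∞` realize a point of `Ω^♯`, so that `σ` is constant on `[s k, s k + δ)` for a fixed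
`δ > 0`. The shifted states `x (s k + ·)` are bounded and equi-Lipschitz, so by Arzelà–Ascoli a
subsequence converges to some `x'`. For the shifted signals, a diagonal argument gives a further
subsequence such that near each time `t` the signals either settle at a single value or keep
switching arbitrarily close to `t`. By the average dwell-time bound there are few times of the
second kind: each of them attracts switching times of the shifted signals, so their number in an
interval obeys the very same bound. Away from them the signals converge, and the right-continuous
limit `σ'` can switch only there, hence has the same average dwell-time. The integral equation
passes to the limit by dominated convergence, and a limit of shifts visits `Ω^♯` only. Finally
`V(·, γ)` is constant on the points of `Ω^♯` carrying `γ`, because `V` is monotone along the times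
at which `σ = γ`.
-/

open scoped Topology NNReal

lemma exists_strictMono_forall_eventually_or_eventually_not {ι : Type*} [Countable ι]
    (P : ι → ℕ → Prop) :
    ∃ φ : ℕ → ℕ, StrictMono φ ∧
      ∀ i, (∀ᶠ k in atTop, P i (φ k)) ∨ ∀ᶠ k in atTop, ¬P i (φ k) := by
  classical
  obtain ⟨b, φ, hφ, hb⟩ := CompactSpace.tendsto_subseq fun k i => decide (P i k)
  refine ⟨φ, hφ, fun i => ?_⟩
  have hi : ∀ᶠ k in atTop, decide (P i (φ k)) = b i := by
    simpa [nhds_discrete] using tendsto_pi_nhds.1 hb i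
  cases h : b i
  · exact .inr <| hi.mono fun k hk => of_decide_eq_false (hk.trans h)
  · exact .inl <| hi.mono fun k hk => of_decide_eq_true (hk.trans h)

lemma exists_subseq_tendsto_of_equicontinuous {X Y : Type*} [TopologicalSpace X]
    [LocallyCompactSpace X] [SigmaCompactSpace X] [MetricSpace Y] {F : ℕ → X → Y} {B : Set Y}
    (hB : IsCompact B) (hF : Equicontinuous F) (hmem : ∀ k t, F k t ∈ B) :
    ∃ φ : ℕ → ℕ, StrictMono φ ∧ ∃ g : X → Y, Continuous g ∧
      ∀ t, Tendsto (fun k => F (φ k) t) atTop (𝓝 (g t)) := by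
  set T : Set (X → Y) := closure (range F)
  have hT : T.Equicontinuous := (equicontinuous_iff_range.1 hF).closure
  have hTc : IsCompact T := (isCompact_univ_pi fun _ : X => hB).closure_of_subset <|
    range_subset_iff.2 fun k t _ => hmem k t
  set S : Set C(X, Y) := {g | ⇑g ∈ T}
  have hS : IsCompact S := by
    refine ArzelaAscoli.isCompact_of_equicontinuous S ?_ (hT.comp fun g : S => ⟨g, g.2⟩)
    convert hTc
    exact Subset.antisymm (image_subset_iff.2 fun _ hg => hg) fun g hg =>
      ⟨⟨g, hT.continuous ⟨g, hg⟩⟩, hg, rfl⟩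
  obtain ⟨g, -, φ, hφ, hg⟩ := hS.tendsto_subseq (x := fun k => ⟨F k, hF.continuous k⟩)
    fun k => subset_closure (mem_range_self k)
  exact ⟨φ, hφ, g, g.continuous, fun t => ((continuous_eval_const t).tendsto g).comp hg⟩

lemma encard_inter_le_of_frequently {ι X : Type*} [TopologicalSpace X] [T2Space X] {l : Filter ι}
    {A : ι → Set X} {D W : Set X} {K : ℕ∞} (hW : IsOpen W)
    (hD : ∀ t ∈ D, ∀ U ∈ 𝓝 t, ∀ᶠ k in l, (A k ∩ U).Nonempty)
    (hK : ∃ᶠ k in l, (A k ∩ W).encard ≤ K) : (D ∩ W).encard ≤ K := by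
  by_contra! hlt
  obtain ⟨F, hFD, hF⟩ := exists_subset_encard_eq (Order.add_one_le_of_lt hlt)
  have hFfin : F.Finite := finite_of_encard_eq_coe
    (hF.trans (ENat.natCast_toNat (by simpa using hlt.ne_top)).symm)
  obtain ⟨U, hU, hdisj⟩ := hFfin.t2_separation
  have hmeet : ∀ᶠ k in l, ∀ t ∈ F, (A k ∩ (U t ∩ W)).Nonempty :=
    hFfin.eventually_all.2 fun t ht => hD t (hFD ht).1 _ <|
      inter_mem ((hU t).2.mem_nhds (hU t).1) (hW.mem_nhds (hFD ht).2)
  obtain ⟨k, hk, hmeet⟩ := (hK.and_eventually hmeet).exists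
  choose! a ha using hmeet
  have hinj : InjOn a F := fun t ht u hu htu => hdisj.elim_set ht hu (a t) (ha t ht).2.1
    (htu ▸ (ha u hu).2.1)
  have hcard : F.encard ≤ (A k ∩ W).encard :=
    encard_le_encard_of_injOn (fun t ht => ⟨(ha t ht).1, (ha t ht).2.2⟩) hinj
  exact (hcard.trans hk).not_gt (hF ▸ ENat.lt_add_one_iff hlt.ne_top |>.2 le_rfl)

lemma encard_inter_Ioo_le_of_forall_finite {α : Type*} [ConditionallyCompleteLinearOrder α]
    [TopologicalSpace α] [OrderTopology α] [DenselyOrdered α] {S : Set α} {a b : α} {K : ℕ∞}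
    (hS : ∀ c, ∀ᶠ u in 𝓝[>] c, u ∉ S)
    (hK : ∀ d, a < d → d ≤ b → (S ∩ Ioo a d).Finite → (S ∩ Ioo a d).encard ≤ K) :
    (S ∩ Ioo a b).encard ≤ K := by
  rcases le_or_gt b a with hba | hab
  · simp [Ioo_eq_empty hba.not_gt]
  rcases eq_or_ne K ⊤ with rfl | hKtop
  · exact le_top
  let G : Set α := {d | (S ∩ Ioo a d).encard ≤ K}
  have hG : IsClosed G := isClosed_iff_frequently.2 fun c hc => by
    have hlim : (S ∩ Iio c ∩ Ioi a).encard ≤ K := by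
      refine encard_inter_le_of_frequently (l := 𝓝 c) (A := fun d => S ∩ Iio d) isOpen_Ioi
        (fun t ht U hU => ?_) (hc.mono fun d (hd : (S ∩ Ioo a d).encard ≤ K) => ?_)
      · filter_upwards [lt_mem_nhds ht.2] with d hd using ⟨t, ⟨ht.1, hd⟩, mem_of_mem_nhds hU⟩
      · simpa only [inter_assoc, Iio_inter_Ioi] using hd
    rwa [inter_assoc, Iio_inter_Ioi] at hlim
  have hsub : Icc a b ⊆ G := by
    refine (hG.inter isClosed_Icc).Icc_subset_of_forall_exists_gt (by simp [G]) ?_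
    rintro c ⟨hcG, hac, hcb⟩ y (hcy : c < y)
    obtain ⟨d, hcd, hdS⟩ := (mem_nhdsGT_iff_exists_Ioo_subset' hcy).1 (hS c)
    have hce : c < min d (min y b) := lt_min hcd (lt_min hcy hcb)
    have hfin : (insert c (S ∩ Ioo a c)).Finite :=
      (finite_of_encard_le_coe (hcG.trans (ENat.natCast_toNat hKtop).ge)).insert c
    refine ⟨min d (min y b), hK _ (hac.trans_lt hce) (by simp) (hfin.subset ?_), hce, by simp⟩
    rintro u ⟨huS, hau, hue⟩
    rcases lt_trichotomy u c with huc | rfl | hcu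
    · exact .inr ⟨huS, hau, huc⟩
    · exact .inl rfl
    · exact absurd huS (hdS ⟨hcu, hue.trans_le (min_le_left _ _)⟩)
  exact hsub (right_mem_Icc.2 hab.le)

section NhdsGT

variable {α : Type*} [LinearOrder α] [TopologicalSpace α] [OrderTopology α]
  [SecondCountableTopology α]

lemma countable_of_forall_eventually_nhdsGT_notMem {S : Set α}
    (hS : ∀ t ∈ S, ∀ᶠ u in 𝓝[>] t, u ∉ S) : S.Countable := by
  refine (countable_setOfPred_isolated_right_within (s := S)).mono
    fun t ht => mem_ofPred.2 ⟨ht, ?_⟩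
  rw [inter_comm, nhdsWithin_inter', ← disjoint_iff, disjoint_principal_right]
  exact hS t ht

lemma measurableSet_of_forall_mem_nhdsGT [MeasurableSpace α] [BorelSpace α] {A : Set α}
    (hA : ∀ t ∈ A, A ∈ 𝓝[>] t) : MeasurableSet A := by
  have hcount : (A \ interior A).Countable := by
    refine countable_of_forall_eventually_nhdsGT_notMem fun t ht => ?_
    filter_upwards [eventually_eventually_nhdsWithin.2 (hA t ht.1), self_mem_nhdsWithin]
      with u hu htu
    rw [isOpen_Ioi.nhdsWithin_eq htu] at hu
    exact fun hu' => hu'.2 (mem_interior_iff_mem_nhds.2 hu)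
  rw [← union_sdiff_cancel (interior_subset (s := A))]
  exact isOpen_interior.measurableSet.union hcount.measurableSet

end NhdsGT

section Signals

variable {Γ : Type*} {σ : ℝ → Γ} {τD : ℝ} {N₀ : ℕ}

lemma rightLocConst_iff_eventually_nhdsGE :
    RightLocConst σ ↔ ∀ s, ∀ᶠ u in 𝓝[≥] s, σ u = σ s := by
  refine forall_congr' fun s => ⟨?_, fun h => ?_⟩
  · rintro ⟨ε, hε, h⟩
    filter_upwards [Ico_mem_nhdsGE (lt_add_of_pos_right s hε)] with u hu using h u hu.1 hu.2
  · obtain ⟨b, hb, hsub⟩ := mem_nhdsGE_iff_exists_Ico_subset.1 h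
    exact ⟨b - s, sub_pos.2 hb, fun u hsu hub => hsub ⟨hsu, by linarith⟩⟩

lemma mem_switchTimes_iff_frequently_nhdsLT {s : ℝ} :
    s ∈ SwitchTimes σ ↔ 0 < s ∧ ∃ᶠ u in 𝓝[<] s, σ u ≠ σ s := by
  refine and_congr_right fun _ => ⟨fun h => ?_, fun h ε hε => ?_⟩
  · rw [(nhdsLT_basis s).frequently_iff]
    intro a has
    obtain ⟨u, hau, hus, hu⟩ := h (s - a) (sub_pos.2 has)
    exact ⟨u, ⟨by linarith, hus⟩, hu⟩
  · obtain ⟨u, hu, hus⟩ := (h.and_eventually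
      (Ioo_mem_nhdsLT (sub_lt_self s hε))).exists
    exact ⟨u, hus.1, hus.2, hu⟩

namespace RightLocConst

lemma measurableSet_preimage (hσ : RightLocConst σ) (T : Set Γ) : MeasurableSet (σ ⁻¹' T) :=
  measurableSet_of_forall_mem_nhdsGT fun t ht => by
    filter_upwards [(rightLocConst_iff_eventually_nhdsGE.1 hσ t).filter_mono
      (nhdsWithin_mono t Ioi_subset_Ici_self)] with u hu
    rwa [mem_preimage, hu]

lemma comp_const_add (hσ : RightLocConst σ) (c : ℝ) :
    RightLocConst fun t => σ (c + t) := fun t => by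
  obtain ⟨ε, hε, h⟩ := hσ (c + t)
  exact ⟨ε, hε, fun u hu hu' => h _ (by linarith) (by linarith)⟩

lemma eventually_notMem_switchTimes (hσ : RightLocConst σ) (s : ℝ) :
    ∀ᶠ u in 𝓝[>] s, u ∉ SwitchTimes σ := by
  obtain ⟨ε, hε, h⟩ := hσ s
  filter_upwards [Ioo_mem_nhdsGT (lt_add_of_pos_right s hε)] with u hu hswitch
  obtain ⟨v, hsv, hvu, hne⟩ := hswitch.2 (u - s) (sub_pos.2 hu.1)
  exact hne <| (h v (by linarith) (hvu.trans hu.2)).trans (h u hu.1.le hu.2).symm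

lemma exists_switchTime_of_ne (hσ : RightLocConst σ) {a b : ℝ} (ha : 0 ≤ a) (hab : a ≤ b)
    (hne : σ b ≠ σ a) : (SwitchTimes σ ∩ Ioc a b).Nonempty := by
  let _ : TopologicalSpace Γ := ⊥
  have : DiscreteTopology Γ := ⟨rfl⟩
  by_contra! hempty
  have hcont : ContinuousOn σ (Icc a b) := fun u hu => by
    rw [ContinuousWithinAt, nhds_discrete, tendsto_pure]
    have hright := rightLocConst_iff_eventually_nhdsGE.1 hσ u
    rcases hu.1.eq_or_lt with rfl | hau
    · exact hright.filter_mono (nhdsWithin_mono _ Icc_subset_Ici_self)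
    · have hleft : ¬∃ᶠ v in 𝓝[<] u, σ v ≠ σ u := fun h => eq_empty_iff_forall_notMem.1 hempty u
        ⟨mem_switchTimes_iff_frequently_nhdsLT.2 ⟨ha.trans_lt hau, h⟩, hau, hu.2⟩
      refine Eventually.filter_mono nhdsWithin_le_nhds ?_
      rw [← nhdsLT_sup_nhdsGE, eventually_sup]
      exact ⟨by simpa using hleft, hright⟩
  exact hne <| isPreconnected_Icc.constant hcont (right_mem_Icc.2 hab) (left_mem_Icc.2 hab)

lemma exists_switchTime_uIcc_of_ne (hσ : RightLocConst σ) {a b : ℝ} (ha : 0 ≤ a) (hb : 0 ≤ b)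
    (hne : σ a ≠ σ b) : (SwitchTimes σ ∩ uIcc a b).Nonempty := by
  wlog hab : a ≤ b generalizing a b
  · exact uIcc_comm b a ▸ this hb ha hne.symm (le_of_not_ge hab)
  · exact (hσ.exists_switchTime_of_ne ha hab hne.symm).mono
      (inter_subset_inter_right _ (Ioc_subset_Icc_self.trans Icc_subset_uIcc))

end RightLocConst

lemma isSwitchingSignal_iff_encard_le (hτ : 0 < τD) :
    IsSwitchingSignal σ τD N₀ ↔ RightLocConst σ ∧ ∀ a b : ℝ, 0 ≤ a → a < b →
      (SwitchTimes σ ∩ Ioo a b).encard ≤ ⌊N₀ + (b - a) / τD⌋₊ := by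
  refine and_congr_right fun hσ => ⟨fun hADT a b ha _ => ?_, fun h a b ha hab => ?_⟩
  -- `Nat.card` is `0` on infinite sets, so a priori the dwell-time bound only controls the finite
  -- sets of switching times.
  · refine encard_inter_Ioo_le_of_forall_finite hσ.eventually_notMem_switchTimes
      fun d had hdb hfin => ?_
    have hcard := (hADT a d ha had).trans
      (b := (N₀ : ℝ) + (d - a) / τD) (c := (N₀ : ℝ) + (b - a) / τD) (by gcongr)
    rw [hfin.encard_eq_coe_toFinset_card, ← Nat.card_eq_card_finite_toFinset hfin]
    exact_mod_cast Nat.le_floor hcard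
  · have hfloor := ENat.toNat_le_of_le_natCast (h a b ha hab)
    exact (Nat.cast_le.2 hfloor).trans <| Nat.floor_le <|
      add_nonneg N₀.cast_nonneg (div_nonneg (sub_nonneg.2 hab.le) hτ.le)

/-- The times from which `σ` keeps the value `γ` for a duration at least `δ`. Membership in `Ω^♯`
amounts to accumulation along such a set, see `mem_omegaSharp_iff`. -/
def dwellSet (σ : ℝ → Γ) (γ : Γ) (δ : ℝ) : Set ℝ :=
  {w | ∀ u ∈ Ico w (w + δ), σ u = γ}

lemma mem_dwellSet_iff_le_tau1_sub (hσ : RightLocConst σ) {γ : Γ} {δ w : ℝ} (hδ : 0 < δ)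
    (hw : 0 ≤ w) : w ∈ dwellSet σ γ δ ↔ σ w = γ ∧ (δ : EReal) ≤ tau1 σ w - w := by
  have hfirst : (δ : EReal) ≤ tau1 σ w - w ↔ ∀ s ∈ SwitchTimes σ, w < s → w + δ ≤ s := by
    rw [EReal.le_sub_iff_add_le (by simp) (by simp), add_comm, ← EReal.coe_add, tau1, le_sInf_iff,
      forall_mem_image]
    simp only [mem_inter_iff, mem_Ioi, and_imp, EReal.coe_le_coe_iff]
  rw [hfirst]
  constructor
  · intro h
    have hwγ : σ w = γ := h w ⟨le_rfl, by linarith⟩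
    refine ⟨hwγ, fun s hs hws => le_of_not_gt fun hsδ => ?_⟩
    obtain ⟨u, hwu, hus, hne⟩ := hs.2 (s - w) (sub_pos.2 hws)
    exact hne <| (h u ⟨by linarith, hus.trans hsδ⟩).trans (h s ⟨hws.le, hsδ⟩).symm
  · rintro ⟨rfl, h⟩ u ⟨hwu, huδ⟩
    by_contra hne
    obtain ⟨s, hs, hws, hsu⟩ := hσ.exists_switchTime_of_ne hw hwu hne
    linarith [h s hs hws]

end Signals

section OmegaSharp

variable {n m : ℕ} {x : ℝ → EuclideanSpace ℝ (Fin n)} {σ : ℝ → Fin m}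
  {ξ : EuclideanSpace ℝ (Fin n)} {γ : Fin m}

lemma exists_seq_mem_dwellSet_of_mem_omegaSharp (hσ : RightLocConst σ)
    (h : (ξ, γ) ∈ OmegaSharp x σ) :
    ∃ s : ℕ → ℝ, (∀ k, 0 ≤ s k) ∧ Tendsto s atTop atTop ∧ Tendsto (x ∘ s) atTop (𝓝 ξ) ∧
      ∃ δ > 0, ∀ᶠ k in atTop, s k ∈ dwellSet σ γ δ := by
  obtain ⟨s, -, hs0, hs, ⟨r, hr, htau⟩, hx, hγ⟩ := h
  obtain ⟨δ, hδ, hδr⟩ := EReal.lt_iff_exists_real_btwn.1 hr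
  have hδ : 0 < δ := mod_cast hδ
  refine ⟨s, hs0, hs, hx, δ, hδ, ?_⟩
  filter_upwards [hγ, htau.eventually_const_lt hδr] with k hk hk'
  exact (mem_dwellSet_iff_le_tau1_sub hσ hδ (hs0 k)).2 ⟨hk, hk'.le⟩

lemma mem_omegaSharp_iff (hσ : RightLocConst σ) :
    (ξ, γ) ∈ OmegaSharp x σ ↔ ∃ δ > 0, MapClusterPt ξ (atTop ⊓ 𝓟 (dwellSet σ γ δ)) x := by
  constructor
  · intro h
    obtain ⟨s, -, hs, hx, δ, hδ, hdwell⟩ := exists_seq_mem_dwellSet_of_mem_omegaSharp hσ h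
    exact ⟨δ, hδ, hx.mapClusterPt.of_comp (tendsto_inf.2 ⟨hs, tendsto_principal.2 hdwell⟩)⟩
  · rintro ⟨δ, hδ, hξ⟩
    obtain ⟨s, hx, hs⟩ := hξ.exists_seq_tendsto
    obtain ⟨hs, hdwell⟩ := tendsto_inf.1 hs
    rw [tendsto_principal] at hdwell
    have hgap : ∀ᶠ k in atTop, σ (s k) = γ ∧ (δ : EReal) ≤ tau1 σ (s k) - s k := by
      filter_upwards [hdwell, hs.eventually_ge_atTop 0] with k hk hk0
        using (mem_dwellSet_iff_le_tau1_sub hσ hδ hk0).1 hk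
    obtain ⟨r, φ, hφ, hr⟩ := CompactSpace.tendsto_subseq fun k => tau1 σ (s k) - s k
    have hδr : (δ : EReal) ≤ r :=
      ge_of_tendsto hr (hφ.tendsto_atTop.eventually (hgap.mono fun _ h => h.2))
    obtain ⟨ψ, hψ, hmono⟩ := strictMono_subseq_of_tendsto_atTop (hs.comp hφ.tendsto_atTop)
    obtain ⟨N, hN⟩ := eventually_atTop.1
      (((hs.comp hφ.tendsto_atTop).comp hψ.tendsto_atTop).eventually_ge_atTop 0)
    have hψN : Tendsto (fun k => ψ (k + N)) atTop atTop :=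
      hψ.tendsto_atTop.comp (tendsto_add_atTop_nat N)
    have hφψN := hφ.tendsto_atTop.comp hψN
    exact ⟨fun k => s (φ (ψ (k + N))), hmono.comp (strictMono_id.add_const N),
      fun k => hN _ (Nat.le_add_left N k), hs.comp hφψN,
      ⟨r, (EReal.coe_pos.2 hδ).trans_le hδr, hr.comp hψN⟩, hx.comp hφψN,
      hφψN.eventually (hgap.mono fun _ h => h.1)⟩

end OmegaSharp

section SettlesAt

variable {X Γ : Type*} [TopologicalSpace X] {σs : ℕ → X → Γ} {t : X} {γ : Γ}

/-- The functions `σs k` are eventually constantly `γ` on a common neighbourhood of `t`: locally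
uniform convergence at `t` of functions with values in a discrete space. -/
def SettlesAt (σs : ℕ → X → Γ) (t : X) (γ : Γ) : Prop :=
  ∀ᶠ p in atTop ×ˢ 𝓝 t, σs p.1 p.2 = γ

namespace SettlesAt

lemma eventually_eq (h : SettlesAt σs t γ) : ∀ᶠ k in atTop, σs k t = γ :=
  h.curry.mono fun _ hk => hk.self_of_nhds

lemma unique {γ' : Γ} (h : SettlesAt σs t γ) (h' : SettlesAt σs t γ') : γ = γ' := by
  obtain ⟨k, hk, hk'⟩ := (h.eventually_eq.and h'.eventually_eq).exists
  exact hk.symm.trans hk'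

lemma eventually_nhds (h : SettlesAt σs t γ) : ∀ᶠ u in 𝓝 t, SettlesAt σs u γ := by
  obtain ⟨P, hP, Q, hQ, hPQ⟩ := eventually_prod_iff.1 h
  filter_upwards [eventually_eventually_nhds.2 hQ] with u hu
  exact eventually_prod_iff.2 ⟨P, hP, Q, hu, hPQ⟩

lemma comp_tendsto {φ : ℕ → ℕ} (h : SettlesAt σs t γ) (hφ : Tendsto φ atTop atTop) :
    SettlesAt (σs ∘ φ) t γ :=
  (hφ.prodMap tendsto_id).eventually h

lemma eventually_forall_mem_eq {K : Set X} (hK : IsCompact K)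
    (h : ∀ t ∈ K, SettlesAt σs t γ) : ∀ᶠ k in atTop, ∀ u ∈ K, σs k u = γ := by
  have hunif : ∀ᶠ p in atTop ×ˢ 𝓝ˢ K, σs p.1 p.2 = γ := hK.mem_prod_nhdsSet_of_forall h
  exact hunif.curry.mono fun _ hk => hk.self_of_nhdsSet

end SettlesAt

lemma exists_subseq_forall_settlesAt_or_eventually_ne [SecondCountableTopology X] [Finite Γ]
    (σs : ℕ → X → Γ) : ∃ φ : ℕ → ℕ, StrictMono φ ∧ ∀ t, (∃ γ, SettlesAt (σs ∘ φ) t γ) ∨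
      ∀ U ∈ 𝓝 t, ∀ᶠ k in atTop, ∃ u ∈ U, σs (φ k) u ≠ σs (φ k) t := by
  have := TopologicalSpace.countable_countableBasis X
  obtain ⟨φ, hφ, hdich⟩ := exists_strictMono_forall_eventually_or_eventually_not
    fun (i : TopologicalSpace.countableBasis X × Γ) k => ∀ u ∈ i.1.1, σs k u = i.2
  have hbasis := TopologicalSpace.isBasis_countableBasis X
  refine ⟨φ, hφ, fun t => or_iff_not_imp_left.2 fun hsettle U hU => ?_⟩
  obtain ⟨b, hb, htb, hbU⟩ := hbasis.mem_nhds_iff.1 hU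
  have hne : ∀ γ, ∀ᶠ k in atTop, ¬∀ u ∈ b, σs (φ k) u = γ := fun γ =>
    (hdich (⟨b, hb⟩, γ)).resolve_left fun h => hsettle ⟨γ, eventually_prod_iff.2
      ⟨_, h, _, (hbasis.isOpen hb).mem_nhds htb, fun hk _ hu => hk _ hu⟩⟩
  filter_upwards [eventually_all.2 hne] with k hk
  obtain ⟨u, hub, hu⟩ := by simpa only [not_forall] using hk (σs (φ k) t)
  exact ⟨u, hbU hub, hu⟩

end SettlesAt

section IsRightLimit

variable {Γ : Type*} {σs : ℕ → ℝ → Γ} {σ' : ℝ → Γ}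

/-- `σ'` is the right-continuous limit of the signals `σs k`: immediately to the right of each time
`t` they settle at the value `σ' t`. At `t` itself they may fail to converge, since switching times
of the `σs k` may accumulate there. -/
def IsRightLimit (σs : ℕ → ℝ → Γ) (σ' : ℝ → Γ) : Prop :=
  ∀ t, ∀ᶠ u in 𝓝[>] t, SettlesAt σs u (σ' t)

namespace IsRightLimit

lemma comp_tendsto {φ : ℕ → ℕ} (h : IsRightLimit σs σ') (hφ : Tendsto φ atTop atTop) :
    IsRightLimit (σs ∘ φ) σ' :=
  fun t => (h t).mono fun _ hu => hu.comp_tendsto hφ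

lemma eq_of_eventually_nhdsGT (h : IsRightLimit σs σ') {t : ℝ} {γ : Γ}
    (ht : ∀ᶠ u in 𝓝[>] t, SettlesAt σs u γ) : σ' t = γ := by
  obtain ⟨u, hu, hu'⟩ := ((h t).and ht).exists
  exact hu.unique hu'

lemma eq_of_settlesAt (h : IsRightLimit σs σ') {t : ℝ} {γ : Γ} (ht : SettlesAt σs t γ) :
    σ' t = γ :=
  h.eq_of_eventually_nhdsGT (ht.eventually_nhds.filter_mono nhdsWithin_le_nhds)

lemma rightLocConst (h : IsRightLimit σs σ') : RightLocConst σ' := by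
  refine rightLocConst_iff_eventually_nhdsGE.2 fun t => ?_
  rw [← Ioi_insert, nhdsWithin_insert, eventually_sup]
  exact ⟨eventually_pure.2 rfl, (h t).mono fun u hu => h.eq_of_settlesAt hu⟩

lemma not_settlesAt_of_mem_switchTimes (h : IsRightLimit σs σ') {t : ℝ}
    (ht : t ∈ SwitchTimes σ') (γ : Γ) : ¬SettlesAt σs t γ := by
  intro hγ
  refine (mem_switchTimes_iff_frequently_nhdsLT.1 ht).2 ?_
  filter_upwards [hγ.eventually_nhds.filter_mono nhdsWithin_le_nhds] with u hu
  exact not_not.2 <| (h.eq_of_settlesAt hu).trans (h.eq_of_settlesAt hγ).symm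

lemma ae_eventually_eq (h : IsRightLimit σs σ') : ∀ᵐ t, ∀ᶠ k in atTop, σs k t = σ' t := by
  have hcount : {t | ¬SettlesAt σs t (σ' t)}.Countable :=
    countable_of_forall_eventually_nhdsGT_notMem fun t _ => by
      filter_upwards [h t] with u hu
      exact not_not.2 <| (h.eq_of_settlesAt hu).symm ▸ hu
  filter_upwards [hcount.ae_notMem volume] with t ht
  exact (not_not.1 ht).eventually_eq

end IsRightLimit

lemma exists_isRightLimit (h : ∀ t, ∀ᶠ u in 𝓝[>] t, ∃ γ, SettlesAt σs u γ) :
    ∃ σ', IsRightLimit σs σ' := by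
  have : Nonempty Γ := ⟨σs 0 0⟩
  let _ : TopologicalSpace Γ := ⊥
  have : DiscreteTopology Γ := ⟨rfl⟩
  suffices hconst : ∀ t, ∃ γ, ∀ᶠ u in 𝓝[>] t, SettlesAt σs u γ by
    choose σ' hσ' using hconst
    exact ⟨σ', hσ'⟩
  intro t
  obtain ⟨b, hb, hsettle⟩ := mem_nhdsGT_iff_exists_Ioo_subset.1 (h t)
  choose! g hg using fun u (hu : u ∈ Ioo t b) => show ∃ γ, SettlesAt σs u γ from hsettle hu
  have hcont : ContinuousOn g (Ioo t b) := fun u hu => by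
    rw [ContinuousWithinAt, nhds_discrete, tendsto_pure]
    filter_upwards [self_mem_nhdsWithin,
      (hg u hu).eventually_nhds.filter_mono nhdsWithin_le_nhds] with v hv huv
    exact (hg v hv).unique huv
  obtain ⟨c, hc⟩ := nonempty_Ioo.2 (mem_Ioi.1 hb)
  refine ⟨g c, ?_⟩
  filter_upwards [Ioo_mem_nhdsGT hb] with u hu
  exact isPreconnected_Ioo.constant hcont hu hc ▸ hg u hu

end IsRightLimit

section Shift

variable {Γ : Type*} {σ : ℝ → Γ} {τD : ℝ} {N₀ : ℕ} {s : ℕ → ℝ}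

lemma IsSwitchingSignal.encard_preimage_add_switchTimes_le (hτ : 0 < τD)
    (hσ : IsSwitchingSignal σ τD N₀) {a b c : ℝ} (hca : 0 ≤ c + a) (hab : a < b) :
    ((c + ·) ⁻¹' SwitchTimes σ ∩ Ioo a b).encard ≤ ⌊N₀ + (b - a) / τD⌋₊ := by
  have hIoo : (c + ·) ⁻¹' Ioo (c + a) (c + b) = Ioo a b := by simp
  rw [← hIoo, ← preimage_inter, encard_preimage_of_bijective (AddGroup.addLeft_bijective c)]
  simpa only [add_sub_add_left_eq_sub] using
    ((isSwitchingSignal_iff_encard_le hτ).1 hσ).2 _ _ hca (add_lt_add_right hab c)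

lemma RightLocConst.eventually_inter_switchTimes_nonempty (hσ : RightLocConst σ)
    (hs : Tendsto s atTop atTop) {t : ℝ}
    (ht : ∀ U ∈ 𝓝 t, ∀ᶠ k in atTop, ∃ u ∈ U, σ (s k + u) ≠ σ (s k + t)) {U : Set ℝ}
    (hU : U ∈ 𝓝 t) : ∀ᶠ k in atTop, ((s k + ·) ⁻¹' SwitchTimes σ ∩ U).Nonempty := by
  obtain ⟨ε, hε, hεU⟩ := (nhds_basis_Icc_pos t).mem_iff.1 hU
  have hIcc : Icc (t - ε) (t + ε) ∈ 𝓝 t := (nhds_basis_Icc_pos t).mem_of_mem hε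
  filter_upwards [ht _ hIcc, hs.eventually_ge_atTop (ε - t)] with k ⟨u, hu, hne⟩ hk
  obtain ⟨w, hw, hwut⟩ := hσ.exists_switchTime_uIcc_of_ne (by linarith [hu.1]) (by linarith) hne
  obtain ⟨v, rfl⟩ := (AddGroup.addLeft_bijective (s k)).surjective w
  have hv : v ∈ uIcc u t := by
    simpa only [preimage_const_add_uIcc, add_sub_cancel_left] using mem_preimage.2 hwut
  exact ⟨v, hw, hεU (uIcc_subset_Icc hu (mem_of_mem_nhds hIcc) hv)⟩

lemma IsSwitchingSignal.exists_isRightLimit_shift [Finite Γ] (hτ : 0 < τD)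
    (hσ : IsSwitchingSignal σ τD N₀) (hs : Tendsto s atTop atTop) :
    ∃ φ : ℕ → ℕ, StrictMono φ ∧ ∃ σ', IsSwitchingSignal σ' τD N₀ ∧
      IsRightLimit (fun k t => σ (s (φ k) + t)) σ' := by
  obtain ⟨φ, hφ, hdich⟩ :=
    exists_subseq_forall_settlesAt_or_eventually_ne fun k t => σ (s k + t)
  set σs : ℕ → ℝ → Γ := fun k t => σ (s (φ k) + t)
  have hsφ : Tendsto (s ∘ φ) atTop atTop := hs.comp hφ.tendsto_atTop
  set D : Set ℝ := {t | ∀ γ, ¬SettlesAt σs t γ}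
  have hD : ∀ t ∈ D, ∀ U ∈ 𝓝 t,
      ∀ᶠ k in atTop, ((s (φ k) + ·) ⁻¹' SwitchTimes σ ∩ U).Nonempty := fun t ht _ hU =>
    hσ.1.eventually_inter_switchTimes_nonempty hsφ
      ((hdich t).resolve_left (not_exists.2 ht)) hU
  have hcard : ∀ a b, a < b → (D ∩ Ioo a b).encard ≤ ⌊N₀ + (b - a) / τD⌋₊ := by
    intro a b hab
    refine encard_inter_le_of_frequently isOpen_Ioo hD (Eventually.frequently ?_)
    filter_upwards [hsφ.eventually_ge_atTop (-a)] with k (hk : -a ≤ s (φ k))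
    exact hσ.encard_preimage_add_switchTimes_le hτ (by linarith) hab
  obtain ⟨σ', hσ'⟩ : ∃ σ', IsRightLimit σs σ' := exists_isRightLimit fun t => by
    have hfin : (D ∩ Ioo t (t + 1)).Finite := finite_of_encard_le_coe (hcard t _ (by linarith))
    filter_upwards [mem_nhdsWithin_of_mem_nhds (hfin.isClosed.compl_mem_nhds fun h => h.2.1.false),
      Ioo_mem_nhdsGT (lt_add_one t)] with u hu hut
    by_contra h
    exact hu ⟨not_exists.1 h, hut⟩
  refine ⟨φ, hφ, σ', (isSwitchingSignal_iff_encard_le hτ).2 ⟨hσ'.rightLocConst, fun a b _ hab =>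
    (encard_le_encard (inter_subset_inter_left _ fun t ht => ?_)).trans (hcard a b hab)⟩, hσ'⟩
  exact hσ'.not_settlesAt_of_mem_switchTimes ht

end Shift

section VectorField

variable {E F Γ : Type*} [NormedAddCommGroup F] [Finite Γ] {f : E → Γ → F} {x : ℝ → E} {σ : ℝ → Γ}

lemma exists_norm_le_of_isCompact [TopologicalSpace E] (hf : ∀ γ, Continuous fun ξ => f ξ γ)
    {B : Set E} (hB : IsCompact B) : ∃ C : ℝ≥0, ∀ ξ ∈ B, ∀ γ, ‖f ξ γ‖ ≤ C := by
  choose C hC using fun γ => hB.exists_bound_of_continuousOn (hf γ).continuousOn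
  obtain ⟨M, hM⟩ := (finite_range C).bddAbove
  exact ⟨M.toNNReal, fun ξ hξ γ =>
    ((hC γ ξ hξ).trans (hM (mem_range_self γ))).trans (Real.le_coe_toNNReal M)⟩

variable [TopologicalSpace E] [TopologicalSpace.PseudoMetrizableSpace E]

lemma RightLocConst.aestronglyMeasurable_comp (hσ : RightLocConst σ)
    (hf : ∀ γ, Continuous fun ξ => f ξ γ) (hx : ContinuousOn x (Ici 0)) :
    AEStronglyMeasurable (fun t => f (x t) (σ t)) (volume.restrict (Ici 0)) := by
  let _ : TopologicalSpace Γ := ⊥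
  have : DiscreteTopology Γ := ⟨rfl⟩
  let _ : MeasurableSpace Γ := ⊤
  have : OpensMeasurableSpace Γ := ⟨le_top⟩
  have hσm : Measurable σ := fun T _ => hσ.measurableSet_preimage T
  have hfc : Continuous (Function.uncurry f) := continuous_prod_of_discrete_right.2 hf
  exact hfc.comp_aestronglyMeasurable
    ((hx.aestronglyMeasurable measurableSet_Ici).prodMk hσm.stronglyMeasurable.aestronglyMeasurable)

lemma RightLocConst.intervalIntegrable_comp (hσ : RightLocConst σ)
    (hf : ∀ γ, Continuous fun ξ => f ξ γ) (hx : ContinuousOn x (Ici 0)) {a b : ℝ} (ha : 0 ≤ a)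
    (hb : 0 ≤ b) : IntervalIntegrable (fun t => f (x t) (σ t)) volume a b := by
  have hab : uIcc a b ⊆ Ici 0 := ordConnected_Ici.uIcc_subset ha hb
  obtain ⟨C, hC⟩ := exists_norm_le_of_isCompact hf
    (isCompact_uIcc.image_of_continuousOn (hx.mono hab))
  refine (intervalIntegrable_const (c := (C : ℝ))).mono_fun' ?_ ?_
  · exact (hσ.aestronglyMeasurable_comp hf hx).mono_measure
      (Measure.restrict_mono (uIoc_subset_uIcc.trans hab) le_rfl)
  · filter_upwards [ae_restrict_mem measurableSet_uIoc] with t ht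
    exact hC _ (mem_image_of_mem x (uIoc_subset_uIcc ht)) _

end VectorField

section Trajectories

variable {n m : ℕ} {f : EuclideanSpace ℝ (Fin n) → Fin m → EuclideanSpace ℝ (Fin n)}
  {x : ℝ → EuclideanSpace ℝ (Fin n)} {σ : ℝ → Fin m}

namespace IsTrajectory

lemma eq_add_integral (hf : ∀ γ, Continuous fun ξ => f ξ γ) (h : IsTrajectory f x σ)
    (hσ : RightLocConst σ) {a b : ℝ} (ha : 0 ≤ a) (hb : 0 ≤ b) :
    x b = x a + ∫ t in a..b, f (x t) (σ t) := by
  rw [h.2 b hb, h.2 a ha, add_assoc, intervalIntegral.integral_add_adjacent_intervals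
    (hσ.intervalIntegrable_comp hf h.1 le_rfl ha)
    (hσ.intervalIntegrable_comp hf h.1 ha hb)]

lemma comp_const_add (hf : ∀ γ, Continuous fun ξ => f ξ γ) (h : IsTrajectory f x σ)
    (hσ : RightLocConst σ) {c : ℝ} (hc : 0 ≤ c) :
    IsTrajectory f (fun t => x (c + t)) fun t => σ (c + t) := by
  refine ⟨h.1.comp (by fun_prop) fun t ht => add_nonneg hc ht, fun t ht => ?_⟩
  rw [intervalIntegral.integral_comp_add_left fun t => f (x t) (σ t)]
  exact h.eq_add_integral hf hσ (by simpa using hc) (by positivity)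

lemma lipschitzOnWith (hf : ∀ γ, Continuous fun ξ => f ξ γ) (h : IsTrajectory f x σ)
    (hσ : RightLocConst σ) {C : ℝ≥0} (hC : ∀ t, 0 ≤ t → ‖f (x t) (σ t)‖ ≤ C) :
    LipschitzOnWith C x (Ici 0) := by
  refine LipschitzOnWith.of_dist_le_mul fun b hb a ha => ?_
  rw [dist_eq_norm, Real.dist_eq, h.eq_add_integral hf hσ ha hb, add_sub_cancel_left]
  exact intervalIntegral.norm_integral_le_of_norm_le_const fun t ht =>
    hC t (ordConnected_Ici.uIcc_subset ha hb (uIoc_subset_uIcc ht))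

lemma of_tendsto (hf : ∀ γ, Continuous fun ξ => f ξ γ)
    {xs : ℕ → ℝ → EuclideanSpace ℝ (Fin n)} {σs : ℕ → ℝ → Fin m}
    (h : ∀ k, IsTrajectory f (xs k) (σs k)) (hσs : ∀ k, RightLocConst (σs k))
    {B : Set (EuclideanSpace ℝ (Fin n))} (hB : IsCompact B) (hxB : ∀ k t, 0 ≤ t → xs k t ∈ B)
    (hxc : ContinuousOn x (Ici 0)) (hx : ∀ t, 0 ≤ t → Tendsto (xs · t) atTop (𝓝 (x t)))
    (hσ : ∀ᵐ t, ∀ᶠ k in atTop, σs k t = σ t) : IsTrajectory f x σ := by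
  obtain ⟨C, hC⟩ := exists_norm_le_of_isCompact hf hB
  refine ⟨hxc, fun t ht => tendsto_nhds_unique (hx t ht) ?_⟩
  have hpos : ∀ u ∈ uIoc 0 t, 0 ≤ u := fun u hu => (uIoc_of_le ht ▸ hu).1.le
  have hint : Tendsto (fun k => ∫ u in (0:ℝ)..t, f (xs k u) (σs k u)) atTop
      (𝓝 (∫ u in (0:ℝ)..t, f (x u) (σ u))) := by
    refine intervalIntegral.tendsto_integral_filter_of_dominated_convergence (fun _ => (C : ℝ))
      (.of_forall fun k => ?_) (.of_forall fun k => .of_forall fun u hu => ?_)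
      intervalIntegrable_const ?_
    · exact (intervalIntegrable_iff.1 <|
        (hσs k).intervalIntegrable_comp hf (h k).1 le_rfl ht).aestronglyMeasurable
    · exact hC _ (hxB k u (hpos u hu)) _
    · filter_upwards [hσ] with u hu hut
      refine (((hf (σ u)).tendsto _).comp (hx u (hpos u hut))).congr' ?_
      filter_upwards [hu] with k hk
      rw [hk, Function.comp_apply]
  exact ((hx 0 le_rfl).add hint).congr fun k => ((h k).2 t ht).symm

end IsTrajectory

end Trajectories

section ShiftLimit

variable {E Γ : Type*} [TopologicalSpace E] {x x' : ℝ → E} {σ σ' : ℝ → Γ} {s : ℕ → ℝ}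

/-- `(x', σ')` is the limit of the time shifts of `(x, σ)` by the times `s k → ∞`: pointwise on
`[0, ∞)` for the state and in the sense of `IsRightLimit` for the signal. -/
structure IsShiftLimit (x : ℝ → E) (σ : ℝ → Γ) (s : ℕ → ℝ)
    (x' : ℝ → E) (σ' : ℝ → Γ) : Prop where
  nonneg : ∀ k, 0 ≤ s k
  tendsto_atTop : Tendsto s atTop atTop
  continuousOn : ContinuousOn x' (Ici 0)
  tendsto : ∀ t, 0 ≤ t → Tendsto (fun k => x (s k + t)) atTop (𝓝 (x' t))
  isRightLimit : IsRightLimit (fun k t => σ (s k + t)) σ'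

namespace IsShiftLimit

lemma apply_zero [T2Space E] (h : IsShiftLimit x σ s x' σ') {ξ : E}
    (hξ : Tendsto (x ∘ s) atTop (𝓝 ξ)) : x' 0 = ξ :=
  tendsto_nhds_unique (h.tendsto 0 le_rfl) (by simpa only [add_zero, Function.comp_def] using hξ)

lemma signal_apply_zero (h : IsShiftLimit x σ s x' σ') {γ : Γ} {δ : ℝ} (hδ : 0 < δ)
    (hdwell : ∀ᶠ k in atTop, s k ∈ dwellSet σ γ δ) : σ' 0 = γ := by
  refine h.isRightLimit.eq_of_eventually_nhdsGT ?_
  filter_upwards [Ioo_mem_nhdsGT hδ] with u hu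
  filter_upwards [hdwell.prod_mk (Ioo_mem_nhds hu.1 hu.2)] with p hp
  exact hp.1 _ ⟨by linarith [hp.2.1], by linarith [hp.2.2]⟩

lemma mapClusterPt (h : IsShiftLimit x σ s x' σ') {t δ : ℝ} {γ : Γ} (ht : 0 ≤ t)
    (hδ : ∀ u ∈ Icc t (t + δ), SettlesAt (fun k t => σ (s k + t)) u γ) :
    MapClusterPt (x' t) (atTop ⊓ 𝓟 (dwellSet σ γ δ)) x := by
  have hdwell : ∀ᶠ k in atTop, s k + t ∈ dwellSet σ γ δ := by
    filter_upwards [SettlesAt.eventually_forall_mem_eq isCompact_Icc hδ] with k hk u hu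
    simpa only [add_sub_cancel] using hk (u - s k) ⟨by linarith [hu.1], by linarith [hu.2]⟩
  exact (h.tendsto t ht).mapClusterPt.of_comp <| tendsto_inf.2
    ⟨tendsto_atTop_add_const_right _ t h.tendsto_atTop, tendsto_principal.2 hdwell⟩

end IsShiftLimit

end ShiftLimit

section ShiftLimitTrajectories

variable {n m : ℕ} {f : EuclideanSpace ℝ (Fin n) → Fin m → EuclideanSpace ℝ (Fin n)}
  {x x' : ℝ → EuclideanSpace ℝ (Fin n)} {σ σ' : ℝ → Fin m} {s : ℕ → ℝ}

lemma IsTrajectory.exists_isShiftLimit (hf : ∀ γ, Continuous fun ξ => f ξ γ)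
    (hx : IsTrajectory f x σ) {τD : ℝ} (hτ : 0 < τD) {N₀ : ℕ} (hσ : IsSwitchingSignal σ τD N₀)
    {B : Set (EuclideanSpace ℝ (Fin n))} (hB : IsCompact B) (hxB : ∀ t, 0 ≤ t → x t ∈ B)
    (hs0 : ∀ k, 0 ≤ s k) (hs : Tendsto s atTop atTop) :
    ∃ φ : ℕ → ℕ, StrictMono φ ∧ ∃ x' σ', IsSwitchingSignal σ' τD N₀ ∧
      IsShiftLimit x σ (s ∘ φ) x' σ' := by
  obtain ⟨φ, hφ, σ', hσ', hlim⟩ := hσ.exists_isRightLimit_shift hτ hs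
  obtain ⟨C, hC⟩ := exists_norm_le_of_isCompact hf hB
  have hlip := hx.lipschitzOnWith hf hσ.1 fun t ht => hC _ (hxB t ht) _
  have hlips : ∀ k, LipschitzWith C fun t : ℝ≥0 => x (s (φ k) + t) := fun k =>
    .of_dist_le_mul fun t u => by
      simpa only [dist_add_left, NNReal.dist_eq, Real.dist_eq] using
        hlip.dist_le_mul _ (add_nonneg (hs0 (φ k)) t.coe_nonneg) _
          (add_nonneg (hs0 (φ k)) u.coe_nonneg)
  have hequi := (LipschitzWith.uniformEquicontinuous _ C hlips).equicontinuous
  obtain ⟨ψ, hψ, g, hg, hgx⟩ := exists_subseq_tendsto_of_equicontinuous hB hequi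
    fun k t => hxB _ (add_nonneg (hs0 _) t.2)
  refine ⟨φ ∘ ψ, hφ.comp hψ, fun t => g t.toNNReal, σ', hσ', fun k => hs0 _,
    hs.comp (hφ.comp hψ).tendsto_atTop, (hg.comp continuous_real_toNNReal).continuousOn,
    fun t ht => ?_, hlim.comp_tendsto hψ.tendsto_atTop⟩
  simpa only [Function.comp_apply, Real.coe_toNNReal t ht] using hgx t.toNNReal

lemma IsShiftLimit.isTrajectory (h : IsShiftLimit x σ s x' σ') (hf : ∀ γ, Continuous fun ξ => f ξ γ)
    (hx : IsTrajectory f x σ) (hσ : RightLocConst σ) {B : Set (EuclideanSpace ℝ (Fin n))}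
    (hB : IsCompact B) (hxB : ∀ t, 0 ≤ t → x t ∈ B) : IsTrajectory f x' σ' :=
  .of_tendsto hf (fun k => hx.comp_const_add hf hσ (h.nonneg k)) (fun _ => hσ.comp_const_add _)
    hB (fun k _ ht => hxB _ (add_nonneg (h.nonneg k) ht)) h.continuousOn h.tendsto
    h.isRightLimit.ae_eventually_eq

lemma IsShiftLimit.mem_omegaSharp (h : IsShiftLimit x σ s x' σ') (hσ : RightLocConst σ)
    {t : ℝ} (ht : 0 ≤ t) : (x' t, σ' t) ∈ OmegaSharp x σ := by
  -- The shifts need not settle at `t` itself, but they do at the times `u` just after `t`, with a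
  -- dwell time that stays bounded below as `u` decreases to `t`.
  obtain ⟨b, htb, hsettle⟩ := mem_nhdsGT_iff_exists_Ioo_subset.1 (h.isRightLimit t)
  rw [mem_Ioi] at htb
  refine (mem_omegaSharp_iff hσ).2 ⟨(b - t) / 2, by linarith, ?_⟩
  have hright : Tendsto x' (𝓝[>] t) (𝓝 (x' t)) :=
    (h.continuousOn t ht).mono_left (nhdsWithin_mono t (Ioi_subset_Ici ht))
  refine isClosed_setOfPred_clusterPt.mem_of_tendsto hright ?_
  filter_upwards [Ioo_mem_nhdsGT (show t < (t + b) / 2 by linarith)] with u hu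
  exact h.mapClusterPt (ht.trans hu.1.le) fun v hv =>
    hsettle ⟨by linarith [hu.1, hv.1], by linarith [hu.2, hv.2]⟩

end ShiftLimitTrajectories

section LimitSet

variable {n m : ℕ} {x : ℝ → EuclideanSpace ℝ (Fin n)} {σ : ℝ → Fin m}
  {ξ η : EuclideanSpace ℝ (Fin n)} {γ : Fin m}

lemma InTchi.mem_of_mem_omegaSharp {χ : Fin m → Set (EuclideanSpace ℝ (Fin n))}
    (h : InTchi χ x σ) (hχ : ∀ γ, IsClosed (χ γ)) (hξ : (ξ, γ) ∈ OmegaSharp x σ) : ξ ∈ χ γ := by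
  obtain ⟨s, -, hs0, -, -, hx, hγ⟩ := hξ
  exact (hχ γ).mem_of_tendsto hx (hγ.mono fun k (hk : σ (s k) = γ) => hk ▸ h (s k) (hs0 k))

lemma InTV.le_of_mem_omegaSharp {Ω B : Set (EuclideanSpace ℝ (Fin n))}
    {V : EuclideanSpace ℝ (Fin n) → Fin m → ℝ} (h : InTV Ω V x σ)
    (hV : ContinuousOn (fun ξ => V ξ γ) B) (hB : IsClosed B) (hxB : ∀ t, 0 ≤ t → x t ∈ B)
    (hξ : (ξ, γ) ∈ OmegaSharp x σ) (hη : (η, γ) ∈ OmegaSharp x σ) : V ξ γ ≤ V η γ := by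
  have hlim : ∀ {ζ : EuclideanSpace ℝ (Fin n)} {s : ℕ → ℝ}, (∀ k, 0 ≤ s k) →
      Tendsto (fun k => x (s k)) atTop (𝓝 ζ) →
      Tendsto (fun k => V (x (s k)) γ) atTop (𝓝 (V ζ γ)) := fun hs0 hx =>
    (hV _ (hB.mem_of_tendsto hx (.of_forall fun k => hxB _ (hs0 k)))).tendsto.comp
      (tendsto_nhdsWithin_iff.2 ⟨hx, .of_forall fun k => hxB _ (hs0 k)⟩)
  obtain ⟨s, -, hs0, hs, -, hxs, hsγ⟩ := hξ
  obtain ⟨r, -, hr0, -, -, hxr, hrγ⟩ := hη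
  refine ge_of_tendsto (hlim hr0 hxr) (hrγ.mono fun j hj => ?_)
  refine le_of_tendsto (hlim hs0 hxs) ?_
  filter_upwards [hsγ, hs.eventually_ge_atTop (r j)] with k hk hrs
  simpa only [hj, hk] using h.2 (r j) (s k) (hr0 j) hrs (hj.trans hk.symm)

end LimitSet

theorem stmt11_general {n m : ℕ}
    {f : EuclideanSpace ℝ (Fin n) → Fin m → EuclideanSpace ℝ (Fin n)}
    (hf : ∀ γ, Continuous fun ξ => f ξ γ)
    {χ : Fin m → Set (EuclideanSpace ℝ (Fin n))} (hχ : ∀ γ, IsClosed (χ γ))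
    {Ω : Set (EuclideanSpace ℝ (Fin n))} {V : EuclideanSpace ℝ (Fin n) → Fin m → ℝ}
    {τD : ℝ} (hτ : 0 < τD) {N₀ : ℕ} {x : ℝ → EuclideanSpace ℝ (Fin n)} {σ : ℝ → Fin m}
    (htraj : IsTrajectory f x σ) (hσ : IsSwitchingSignal σ τD N₀)
    (hchi : InTchi χ x σ) (hTV : InTV Ω V x σ)
    {B : Set (EuclideanSpace ℝ (Fin n))} (hB : IsCompact B) (hBΩ : B ⊆ Ω)
    (hV : ∀ γ, ContinuousOn (fun ξ => V ξ γ) B) (hxB : ∀ t, 0 ≤ t → x t ∈ B) :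
    ∀ p ∈ OmegaSharp x σ, ∃ x' σ', IsTrajectory f x' σ' ∧ IsSwitchingSignal σ' τD N₀ ∧
      InTchi χ x' σ' ∧ InTVstar Ω V x' σ' ∧ x' 0 = p.1 ∧ σ' 0 = p.2 ∧
      ∀ t : ℝ, 0 ≤ t → (x' t, σ' t) ∈ OmegaSharp x σ := by
  rintro ⟨ξ, γ⟩ hp
  obtain ⟨s, hs0, hs, hξ, δ, hδ, hdwell⟩ := exists_seq_mem_dwellSet_of_mem_omegaSharp hσ.1 hp
  obtain ⟨φ, hφ, x', σ', hσ', hlim⟩ := htraj.exists_isShiftLimit hf hτ hσ hB hxB hs0 hs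
  have hmem : ∀ t, 0 ≤ t → (x' t, σ' t) ∈ OmegaSharp x σ :=
    fun t ht => hlim.mem_omegaSharp hσ.1 ht
  have hB' : InTchi (fun _ => B) x σ := hxB
  have hx'Ω : ∀ t, 0 ≤ t → x' t ∈ Ω := fun t ht =>
    hBΩ <| hB'.mem_of_mem_omegaSharp (fun _ => hB.isClosed) (hmem t ht)
  have hVle : ∀ t t', 0 ≤ t → 0 ≤ t' → σ' t = σ' t' → V (x' t) (σ' t) ≤ V (x' t') (σ' t') :=
    fun t t' ht ht' heq => heq ▸ hTV.le_of_mem_omegaSharp (hV _) hB.isClosed hxB (hmem t ht)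
      (heq ▸ hmem t' ht')
  refine ⟨x', σ', hlim.isTrajectory hf htraj hσ.1 hB hxB, hσ',
    fun t ht => hchi.mem_of_mem_omegaSharp hχ (hmem t ht),
    ⟨⟨hx'Ω, fun t t' ht htt' heq => hVle t' t (ht.trans htt') ht heq.symm⟩,
      fun t t' ht ht' heq => (hVle t t' ht ht' heq).antisymm (hVle t' t ht' ht heq.symm)⟩,
    hlim.apply_zero (hξ.comp hφ.tendsto_atTop),
    hlim.signal_apply_zero hδ (hφ.tendsto_atTop.eventually hdwell), hmem⟩

/-- weak invariance of `Ω^♯`: if `χ` is a closed covering of `ℝⁿ`,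
`V : Ω × Γ → ℝ` is continuous (`Ω ⊆ ℝⁿ` open), and `(x,σ)` is a trajectory in
`𝒯_V ∩ 𝒯[χ] ∩ 𝒯_a[τD,N₀]` evolving in a compact `B ⊂ Ω`, then `Ω^♯(x,σ)` is
weakly-invariant with respect to `𝒯_V^* ∩ 𝒯[χ] ∩ 𝒯_a[τD,N₀]`. -/
theorem stmt11 {n m : ℕ}
    (f : EuclideanSpace ℝ (Fin n) → Fin m → EuclideanSpace ℝ (Fin n))
    (hf : ∀ γ : Fin m, Continuous (fun ξ => f ξ γ))
    (χ : Fin m → Set (EuclideanSpace ℝ (Fin n)))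
    (hχcl : ∀ γ, IsClosed (χ γ)) (hχcov : (⋃ γ, χ γ) = Set.univ)
    (Ω : Set (EuclideanSpace ℝ (Fin n))) (hΩ : IsOpen Ω)
    (V : EuclideanSpace ℝ (Fin n) → Fin m → ℝ)
    (hV : ∀ γ : Fin m, ContinuousOn (fun ξ => V ξ γ) Ω)
    (τD : ℝ) (hτ : 0 < τD) (N₀ : ℕ)
    (x : ℝ → EuclideanSpace ℝ (Fin n)) (σ : ℝ → Fin m)
    (htraj : IsTrajectory f x σ) (hsig : IsSwitchingSignal σ τD N₀)
    (hchi : InTchi χ x σ) (hTV : InTV Ω V x σ)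
    (B : Set (EuclideanSpace ℝ (Fin n))) (hB : IsCompact B) (hBΩ : B ⊆ Ω)
    (hxB : ∀ t : ℝ, 0 ≤ t → x t ∈ B) :
    ∀ p ∈ OmegaSharp x σ,
      ∃ x' : ℝ → EuclideanSpace ℝ (Fin n), ∃ σ' : ℝ → Fin m,
        IsTrajectory f x' σ' ∧ IsSwitchingSignal σ' τD N₀ ∧
        InTchi χ x' σ' ∧ InTVstar Ω V x' σ' ∧
        x' 0 = p.1 ∧ σ' 0 = p.2 ∧
        ∀ t : ℝ, 0 ≤ t → (x' t, σ' t) ∈ OmegaSharp x σ := by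
  exact stmt11_general hf hχcl hτ htraj hsig hchi hTV hB hBΩ (fun γ => (hV γ).mono hBΩ) hxB
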